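/- arXiv:2406.03617 — 2 statements merged into one kernel-verified Lean document; each statement's English description precedes it below -/
import Mathlib

section
/- Let r be a 4-dimensional semisimple representation of G over k such that the exterior square ⋀²r has a 1-dimensional subrepresentation. Then r has no irreducible 3-dimensional subrepresentation. -/
/-!
Statement 0: Let `r` be a 4-dimensional semisimple representation of `G` over `k` (with `k`
algebraically closed of characteristic 0) such that the exterior square `⋀²r` has a
1-dimensional subrepresentation.  Then `r` has no irreducible 3-dimensional subrepresentation.
-/

open Module

section ExtSq
variable {k : Type} [Field k]
variable {V W : Type} [AddCommGroup V] [Module k V] [AddCommGroup W] [Module k W]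

lemma map_mem_exteriorPower (f : V →ₗ[k] W) (n : ℕ) {x : ExteriorAlgebra k V}
    (hx : x ∈ ⋀[k]^n V) : ExteriorAlgebra.map f x ∈ ⋀[k]^n W := by
  rw [← ExteriorAlgebra.ιMulti_span_fixedDegree] at hx ⊢
  induction hx using Submodule.span_induction with
  | mem y hy =>
      obtain ⟨m, rfl⟩ := hy
      rw [ExteriorAlgebra.map_apply_ιMulti]
      exact Submodule.subset_span ⟨f ∘ m, rfl⟩
  | zero => simp
  | add y z _ _ h1 h2 => rw [map_add]; exact Submodule.add_mem _ h1 h2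
  | smul c y _ h => rw [map_smul]; exact Submodule.smul_mem _ c h

/-- The exterior square of a linear map, as a map between second exterior powers. -/
noncomputable def extSq (f : V →ₗ[k] W) : (⋀[k]^2 V) →ₗ[k] (⋀[k]^2 W) :=
  LinearMap.restrict (ExteriorAlgebra.map f).toLinearMap
    (fun _ hx => map_mem_exteriorPower f 2 hx)

end ExtSq

section Contraction
variable {k V : Type} [Field k] [AddCommGroup V] [Module k V]

/-- The contraction `⋀²V → V` with a functional, `v ∧ w ↦ f v • w - f w • v`, extended to the
whole exterior algebra. -/
noncomputable def contractSq (f : Dual k V) : ExteriorAlgebra k V →ₗ[k] V :=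
  ExteriorAlgebra.ιInv ∘ₗ CliffordAlgebra.contractLeft (Q := (0 : QuadraticForm k V)) f

lemma contractSq_ι_mul_ι (f : Dual k V) (v w : V) :
    contractSq f (ExteriorAlgebra.ι k v * ExteriorAlgebra.ι k w) = f v • w - f w • v := by
  have h : CliffordAlgebra.contractLeft (Q := (0 : QuadraticForm k V)) f
      (ExteriorAlgebra.ι k v * ExteriorAlgebra.ι k w) =
      f v • ExteriorAlgebra.ι k w - f w • ExteriorAlgebra.ι k v := by
    refine (CliffordAlgebra.contractLeft_ι_mul (Q := (0 : QuadraticForm k V)) f v _).trans ?_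
    congr 1
    refine (congrArg _ (CliffordAlgebra.contractLeft_ι (Q := (0 : QuadraticForm k V)) f w)).trans ?_
    rw [Algebra.smul_def]
    exact (Algebra.commutes _ _).symm
  have hι := fun v : V => ExteriorAlgebra.ι_leftInverse (R := k) v
  rw [contractSq, LinearMap.comp_apply, h, map_sub, map_smul, map_smul, hι, hι]

lemma contractSq_add_left (f h : Dual k V) (x : ExteriorAlgebra k V) :
    contractSq (f + h) x = contractSq f x + contractSq h x := by
  simp [contractSq]

lemma contractSq_smul_left (c : k) (f : Dual k V) (x : ExteriorAlgebra k V) :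
    contractSq (c • f) x = c • contractSq f x := by
  simp [contractSq]

/-- Contraction against a fixed element, as a linear map in the functional. -/
noncomputable def contractSqFlip (x : ExteriorAlgebra k V) : Dual k V →ₗ[k] V where
  toFun f := contractSq f x
  map_add' f h := contractSq_add_left f h x
  map_smul' c f := contractSq_smul_left c f x

lemma contractSqFlip_apply (x : ExteriorAlgebra k V) (f : Dual k V) :
    contractSqFlip x f = contractSq f x := rfl

lemma extSq_induction {P : (x : ExteriorAlgebra k V) → x ∈ ⋀[k]^2 V → Prop}
    (hmul : ∀ v w h, P (ExteriorAlgebra.ι k v * ExteriorAlgebra.ι k w) h)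
    (hadd : ∀ x hx y hy, P x hx → P y hy → P (x + y) (add_mem hx hy))
    {x : ExteriorAlgebra k V} (hx : x ∈ ⋀[k]^2 V) : P x hx := by
  have heq : ⋀[k]^2 V = LinearMap.range (ExteriorAlgebra.ι k (M := V)) *
      LinearMap.range (ExteriorAlgebra.ι k (M := V)) := pow_two _
  suffices ∃ h, P x h from this.2
  rw [heq] at hx
  induction hx using Submodule.mul_induction_on' with
  | mem_mul_mem a ha b hb =>
    obtain ⟨v, rfl⟩ := ha
    obtain ⟨w, rfl⟩ := hb
    exact ⟨heq ▸ Submodule.mul_mem_mul ⟨v, rfl⟩ ⟨w, rfl⟩, hmul v w _⟩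
  | add x _ y _ h1 h2 => exact ⟨_, hadd x h1.1 y h2.1 h1.2 h2.2⟩

lemma contractSq_map (g : V →ₗ[k] V) (f : Dual k V) {x : ExteriorAlgebra k V}
    (hx : x ∈ ⋀[k]^2 V) :
    contractSq f (ExteriorAlgebra.map g x) = g (contractSq (f ∘ₗ g) x) := by
  induction hx using extSq_induction with
  | hmul v w _ => simp [contractSq_ι_mul_ι]
  | hadd x _ y _ h1 h2 => simp [h1, h2]

lemma apply_contractSq_swap (f h : Dual k V) {x : ExteriorAlgebra k V} (hx : x ∈ ⋀[k]^2 V) :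
    h (contractSq f x) = - f (contractSq h x) := by
  induction hx using extSq_induction with
  | hmul v w _ => simp [contractSq_ι_mul_ι]; ring
  | hadd x _ y _ h1 h2 => simp [h1, h2]; ring

lemma sum_ι_mul_ι_contractSq {ι : Type} [Fintype ι] (b : Basis ι k V)
    {x : ExteriorAlgebra k V} (hx : x ∈ ⋀[k]^2 V) :
    ∑ i, ExteriorAlgebra.ι k (b i) * ExteriorAlgebra.ι k (contractSq (b.coord i) x) =
      (2 : k) • x := by
  induction hx using extSq_induction with
  | hmul v w _ =>
    have key : ∀ v w : V, ∑ i, ExteriorAlgebra.ι k (b i) * ExteriorAlgebra.ι k (b.coord i v • w) =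
        ExteriorAlgebra.ι k v * ExteriorAlgebra.ι k w := fun v w => by
      conv_rhs => rw [← b.sum_repr v]
      simp only [map_sum, map_smul, Finset.sum_mul, smul_mul_assoc, mul_smul_comm,
        Basis.coord_apply]
    have anti := ExteriorAlgebra.ι_add_mul_swap (R := k) v w
    simp only [contractSq_ι_mul_ι, map_sub, mul_sub, Finset.sum_sub_distrib, key]
    rw [eq_neg_of_add_eq_zero_right anti, sub_neg_eq_add, two_smul]
  | hadd x _ y _ h1 h2 => simp [mul_add, Finset.sum_add_distrib, h1, h2]

lemma eq_zero_of_contractSq_eq_zero [FiniteDimensional k V] [CharZero k]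
    {x : ExteriorAlgebra k V} (hx : x ∈ ⋀[k]^2 V) (h : ∀ f, contractSq f x = 0) : x = 0 := by
  have := sum_ι_mul_ι_contractSq (finBasis k V) hx
  simpa [h] using this.symm

/-- The rank of an element of `⋀²V` is not three. -/
lemma finrank_range_contractSqFlip_ne_three [FiniteDimensional k V] [CharZero k]
    {x : ExteriorAlgebra k V} (hx : x ∈ ⋀[k]^2 V) :
    finrank k (LinearMap.range (contractSqFlip x)) ≠ 3 := by
  intro h3
  let b := finBasisOfFinrankEq k (LinearMap.range (contractSqFlip x)) h3
  choose f hf using fun i => (b i).2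
  let A : Matrix (Fin 3) (Fin 3) k := fun i j => f i (contractSqFlip x (f j))
  have hA : A.transpose = -A := by
    ext i j
    exact apply_contractSq_swap _ _ hx
  have hdet : A.det = 0 := by
    have h := A.det_transpose
    rw [hA, Matrix.det_neg, Fintype.card_fin] at h
    have : (2 : k) * A.det = 0 := by linear_combination -h
    simpa using this
  obtain ⟨c, hc, hAc⟩ := Matrix.exists_mulVec_eq_zero_iff.mpr hdet
  set y := contractSqFlip x (∑ j, c j • f j) with hy
  have hfy : ∀ i, f i y = 0 := fun i => by
    have := congrFun hAc i
    simp only [Matrix.mulVec, dotProduct, Pi.zero_apply, A] at this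
    simpa [hy, mul_comm] using this
  have hy0 : y = 0 := by
    rw [← forall_dual_apply_eq_zero_iff k]
    intro h
    have e := congrArg Subtype.val (b.sum_repr ⟨contractSqFlip x h, h, rfl⟩)
    simp only [Submodule.coe_sum, Submodule.coe_smul, ← hf] at e
    rw [hy, contractSqFlip_apply, apply_contractSq_swap _ _ hx, ← contractSqFlip_apply, ← e,
      map_sum, neg_eq_zero]
    refine Finset.sum_eq_zero fun i _ => ?_
    have hyi := apply_contractSq_swap (f i) (∑ j, c j • f j) hx
    rw [← contractSqFlip_apply, ← contractSqFlip_apply, ← hy, hfy, neg_zero] at hyi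
    rw [map_smul, hyi, smul_zero]
  refine hc (funext (Fintype.linearIndependent_iff.mp b.linearIndependent c (Subtype.ext ?_)))
  simpa [hy, hf] using hy0

lemma exists_mem_forall_eq_smul_of_finrank_eq_one {L : Submodule k V} (h : finrank k L = 1) :
    ∃ x ∈ L, x ≠ 0 ∧ ∀ y ∈ L, ∃ c : k, y = c • x := by
  obtain ⟨x, hx, h⟩ := finrank_eq_one_iff'.mp h
  exact ⟨x, x.2, fun h => hx (Subtype.ext h), fun y hy =>
    (h ⟨y, hy⟩).imp fun _ h => (congrArg Subtype.val h).symm⟩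

end Contraction

/-- If the second exterior power of a four-dimensional representation contains an invariant line,
then no three-dimensional subrepresentation is irreducible. -/
lemma not_irreducible_of_finrank_eq_three {k G V : Type} [Field k] [CharZero k] [Group G]
    [AddCommGroup V] [Module k V] [FiniteDimensional k V]
    (r : Representation k G V) (h4 : finrank k V = 4)
    {x : ExteriorAlgebra k V} (hx : x ∈ ⋀[k]^2 V) (hx0 : x ≠ 0)
    (hgx : ∀ g : G, ∃ c : k, ExteriorAlgebra.map (r g) x = c • x)
    {p : Submodule k V} (hp3 : finrank k p = 3) (hp : ∀ g : G, ∀ v ∈ p, r g v ∈ p)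
    (hirr : ∀ q : Submodule k V, q ≤ p → (∀ g : G, ∀ v ∈ q, r g v ∈ q) → q = ⊥ ∨ q = p) :
    False := by
  have hinv : ∀ (g : G) (v : V), r g (r g⁻¹ v) = v := fun g v => by
    rw [← Module.End.mul_apply, ← map_mul, mul_inv_cancel, map_one, Module.End.one_apply]
  have hinv' : ∀ (g : G) (v : V), r g⁻¹ (r g v) = v := fun g v => by
    simpa only [inv_inv] using hinv g⁻¹ v
  have hmove : ∀ (g : G) (f : Dual k V),
      ∃ c : k, r g (contractSq f x) = c • contractSq (f ∘ₗ r g⁻¹) x := fun g f => by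
    obtain ⟨c, hc⟩ := hgx g
    refine ⟨c, ?_⟩
    have h := contractSq_map (r g) (f ∘ₗ r g⁻¹) hx
    have e : (f ∘ₗ r g⁻¹) ∘ₗ r g = f := by ext v; simp [hinv']
    rw [hc, map_smul, e] at h
    exact h.symm
  have hann : finrank k p.dualAnnihilator = 1 := by
    have := Subspace.finrank_add_finrank_dualAnnihilator_eq p
    omega
  obtain ⟨l, hlp, hl0, hl⟩ := exists_mem_forall_eq_smul_of_finrank_eq_one hann
  have hker : p = LinearMap.ker l := by
    refine Submodule.eq_of_le_of_finrank_eq ((Submodule.mem_dualAnnihilator l).mp hlp) ?_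
    have := Module.Dual.finrank_ker_add_one_of_ne_zero hl0
    omega
  have hlg : ∀ g : G, ∃ c : k, l ∘ₗ r g = c • l := fun g =>
    hl _ <| (Submodule.mem_dualAnnihilator _).mpr fun v hv =>
      (Submodule.mem_dualAnnihilator l).mp hlp _ (hp g v hv)
  have hlx : contractSq l x = 0 := by
    have hmem : contractSq l x ∈ p := by
      rw [hker, LinearMap.mem_ker]
      have := apply_contractSq_swap l l hx
      exact CharZero.eq_neg_self_iff.mp this
    by_contra hne
    have h1 := finrank_span_singleton (K := k) hne
    rcases hirr (k ∙ contractSq l x) (by simpa using hmem) (fun g v hv => by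
      obtain ⟨a, rfl⟩ := Submodule.mem_span_singleton.mp hv
      obtain ⟨c, hc⟩ := hmove g l
      obtain ⟨d, hd⟩ := hlg g⁻¹
      rw [map_smul, hc, hd, contractSq_smul_left]
      exact Submodule.smul_mem _ _ <| Submodule.smul_mem _ _ <| Submodule.smul_mem _ _ <|
        Submodule.mem_span_singleton_self _) with h | h
    · exact hne (Submodule.span_singleton_eq_bot.mp h)
    · rw [h] at h1
      omega
  rcases hirr (LinearMap.range (contractSqFlip x)) (by
      rintro _ ⟨f, rfl⟩
      rw [hker, LinearMap.mem_ker, contractSqFlip_apply, apply_contractSq_swap _ _ hx, hlx,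
        map_zero, neg_zero]) (by
      rintro g _ ⟨f, rfl⟩
      obtain ⟨c, hc⟩ := hmove g f
      rw [contractSqFlip_apply, hc]
      exact Submodule.smul_mem _ _ ⟨_, rfl⟩) with h | h
  · exact hx0 (eq_zero_of_contractSq_eq_zero hx fun f =>
      LinearMap.congr_fun (LinearMap.range_eq_bot.mp h) f)
  · exact finrank_range_contractSqFlip_ne_three hx (h ▸ hp3)

theorem stmt_0 {k G V : Type} [Field k] [IsAlgClosed k] [CharZero k] [Group G]
    [AddCommGroup V] [Module k V] [FiniteDimensional k V]
    (r : Representation k G V) (h4 : finrank k V = 4)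
    -- `r` is semisimple: `V` is the direct sum of a family of irreducible subrepresentations
    (hss : ∃ (ι : Type) (c : ι → Submodule k V),
        iSupIndep c ∧ iSup c = ⊤ ∧
        ∀ i, (∀ g : G, ∀ v ∈ c i, r g v ∈ c i) ∧ c i ≠ ⊥ ∧
          ∀ q : Submodule k V, q ≤ c i → (∀ g : G, ∀ v ∈ q, r g v ∈ q) →
            q = ⊥ ∨ q = c i)
    -- `⋀²r` has a 1-dimensional subrepresentation
    (hline : ∃ L : Submodule k (⋀[k]^2 V), finrank k L = 1 ∧
        ∀ g : G, ∀ x ∈ L, extSq (r g) x ∈ L) :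
    -- `r` has no irreducible 3-dimensional subrepresentation
    ¬ ∃ p : Submodule k V, finrank k p = 3 ∧
        (∀ g : G, ∀ v ∈ p, r g v ∈ p) ∧
        ∀ q : Submodule k V, q ≤ p → (∀ g : G, ∀ v ∈ q, r g v ∈ q) →
          q = ⊥ ∨ q = p := by
  rintro ⟨p, hp3, hp, hirr⟩
  obtain ⟨L, hL1, hL⟩ := hline
  obtain ⟨x, hxL, hx0, hspan⟩ := exists_mem_forall_eq_smul_of_finrank_eq_one hL1
  exact not_irreducible_of_finrank_eq_three r h4 x.2 (fun h => hx0 (Subtype.ext h))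
    (fun g => (hspan _ (hL g x hxL)).imp fun _ h => congrArg Subtype.val h) hp3 hp hirr
end

section
/- Let r = σ₁ ⊕ σ₂, where σ₁ and σ₂ are irreducible 2-dimensional representations of G over k, and let ν be a character of G such that ν occurs in ⋀²r and (det σ₁)·(det σ₂) = ν². Then either det σ₁ = det σ₂ = ν, or there exists a character χ of G with σ₂ ≅ σ₁ ⊗ χ. -/
/-!
Statement 2: Let `r = σ₁ ⊕ σ₂`, where `σ₁` and `σ₂` are irreducible 2-dimensional
representations of `G` over `k`, and let `ν` be a character of `G` such that `ν` occurs in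
`⋀²r` and `(det σ₁)·(det σ₂) = ν²`.  Then either `det σ₁ = det σ₂ = ν`, or there exists a
character `χ` of `G` with `σ₂ ≅ σ₁ ⊗ χ`.
-/

open Module

section ExtSqProd
variable {k : Type} [Field k]
variable {V W V₁ V₂ : Type} [AddCommGroup V] [Module k V] [AddCommGroup W] [Module k W]
  [AddCommGroup V₁] [Module k V₁] [AddCommGroup V₂] [Module k V₂]

lemma extSq_ιMulti (f : V →ₗ[k] W) (m : Fin 2 → V) :
    extSq f (exteriorPower.ιMulti k 2 m) = exteriorPower.ιMulti k 2 (f ∘ m) :=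
  Subtype.ext (ExteriorAlgebra.map_apply_ιMulti f m)

/-- The linear functional `v ↦ b.det ![v, a]` on a plane with basis `b`. -/
noncomputable def detPairing (b : Basis (Fin 2) k V) : V →ₗ[k] Dual k V :=
  (b.coord 1).smulRight (b.coord 0) - (b.coord 0).smulRight (b.coord 1)

lemma detPairing_apply (b : Basis (Fin 2) k V) (a v : V) :
    detPairing b a v = b.det ![v, a] := by
  simp [detPairing, Basis.det_apply, Matrix.det_fin_two, Basis.toMatrix_apply]
  ring

lemma detPairing_map (b : Basis (Fin 2) k V) (f : V →ₗ[k] V) (a v : V) :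
    detPairing b (f a) (f v) = LinearMap.det f * detPairing b a v := by
  rw [detPairing_apply, detPairing_apply, ← Basis.det_comp]
  congr 1
  ext i
  fin_cases i <;> rfl

/-- The alternating form on `V₁ × V₂` extracting the mixed component of the exterior square,
viewed as a map `V₁ → V₂` through the self-duality of the plane `V₁` given by `b.det`. -/
noncomputable def mixedForm (b : Basis (Fin 2) k V₁) :
    (V₁ × V₂) [⋀^Fin 2]→ₗ[k] (V₁ →ₗ[k] V₂) where
  toFun m := (detPairing b (m 0).1).smulRight (m 1).2 - (detPairing b (m 1).1).smulRight (m 0).2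
  map_update_add' := by
    intro _ m i x y
    ext v
    fin_cases i <;> simp [Function.update, add_smul] <;> abel
  map_update_smul' := by
    intro _ m i c x
    ext v
    fin_cases i <;> simp [Function.update, smul_sub, mul_smul, smul_comm c]
  map_eq_zero_of_eq' := by
    intro m i j h hij
    have h01 : m 0 = m 1 := by
      fin_cases i <;> fin_cases j <;> simp_all
    simp [h01]

lemma mixedForm_apply (b : Basis (Fin 2) k V₁) (m : Fin 2 → V₁ × V₂) (v : V₁) :
    mixedForm b m v =
      detPairing b (m 0).1 v • (m 1).2 - detPairing b (m 1).1 v • (m 0).2 := rfl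

/-- The component of the exterior square of `V₁ × V₂` lying in `⋀²V₁ ≃ k`. -/
noncomputable def fstComponent (V₂ : Type) [AddCommGroup V₂] [Module k V₂]
    (b : Basis (Fin 2) k V₁) : (⋀[k]^2 (V₁ × V₂)) →ₗ[k] k :=
  exteriorPower.alternatingMapLinearEquiv (b.det.compLinearMap (LinearMap.fst k V₁ V₂))

/-- The component of the exterior square of `V₁ × V₂` lying in `⋀²V₂ ≃ k`. -/
noncomputable def sndComponent (V₁ : Type) [AddCommGroup V₁] [Module k V₁]
    (b : Basis (Fin 2) k V₂) : (⋀[k]^2 (V₁ × V₂)) →ₗ[k] k :=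
  exteriorPower.alternatingMapLinearEquiv (b.det.compLinearMap (LinearMap.snd k V₁ V₂))

/-- The component of the exterior square of `V₁ × V₂` lying in `V₁ ⊗ V₂ ≃ (V₁ → V₂)`. -/
noncomputable def mixedComponent (V₂ : Type) [AddCommGroup V₂] [Module k V₂]
    (b : Basis (Fin 2) k V₁) : (⋀[k]^2 (V₁ × V₂)) →ₗ[k] (V₁ →ₗ[k] V₂) :=
  exteriorPower.alternatingMapLinearEquiv (mixedForm b)

lemma fstComponent_extSq (b : Basis (Fin 2) k V₁) (f : V₁ →ₗ[k] V₁) (g : V₂ →ₗ[k] V₂)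
    (x : ⋀[k]^2 (V₁ × V₂)) :
    fstComponent V₂ b (extSq (f.prodMap g) x) = LinearMap.det f * fstComponent V₂ b x := by
  suffices h : fstComponent V₂ b ∘ₗ extSq (f.prodMap g) =
      LinearMap.det f • fstComponent V₂ b from LinearMap.congr_fun h x
  ext m
  simp only [LinearMap.compAlternatingMap_apply, LinearMap.comp_apply, LinearMap.smul_apply,
    extSq_ιMulti, fstComponent, exteriorPower.alternatingMapLinearEquiv_apply_ιMulti,
    AlternatingMap.compLinearMap_apply, smul_eq_mul, ← Basis.det_comp]
  rfl

lemma sndComponent_extSq (b : Basis (Fin 2) k V₂) (f : V₁ →ₗ[k] V₁) (g : V₂ →ₗ[k] V₂)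
    (x : ⋀[k]^2 (V₁ × V₂)) :
    sndComponent V₁ b (extSq (f.prodMap g) x) = LinearMap.det g * sndComponent V₁ b x := by
  suffices h : sndComponent V₁ b ∘ₗ extSq (f.prodMap g) =
      LinearMap.det g • sndComponent V₁ b from LinearMap.congr_fun h x
  ext m
  simp only [LinearMap.compAlternatingMap_apply, LinearMap.comp_apply, LinearMap.smul_apply,
    extSq_ιMulti, sndComponent, exteriorPower.alternatingMapLinearEquiv_apply_ιMulti,
    AlternatingMap.compLinearMap_apply, smul_eq_mul, ← Basis.det_comp]
  rfl

lemma mixedComponent_extSq (b : Basis (Fin 2) k V₁) (f : V₁ →ₗ[k] V₁) (g : V₂ →ₗ[k] V₂)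
    (x : ⋀[k]^2 (V₁ × V₂)) (v : V₁) :
    mixedComponent V₂ b (extSq (f.prodMap g) x) (f v) =
      LinearMap.det f • g (mixedComponent V₂ b x v) := by
  suffices h : LinearMap.lcomp k V₂ f ∘ₗ mixedComponent V₂ b ∘ₗ extSq (f.prodMap g) =
      LinearMap.det f • (LinearMap.compRight k g ∘ₗ mixedComponent V₂ b) from
    LinearMap.congr_fun (LinearMap.congr_fun h x) v
  ext m v
  simp [extSq_ιMulti, mixedComponent, exteriorPower.alternatingMapLinearEquiv_apply_ιMulti,
    mixedForm_apply, detPairing_map, smul_sub, mul_smul]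

lemma components_injective (b₁ : Basis (Fin 2) k V₁) (b₂ : Basis (Fin 2) k V₂) :
    Function.Injective
      ((fstComponent V₂ b₁).prod ((sndComponent V₁ b₂).prod (mixedComponent V₂ b₁))) := by
  have := b₁.finiteDimensional_of_finite
  have := b₂.finiteDimensional_of_finite
  have h1 : finrank k V₁ = 2 := by simpa using finrank_eq_card_basis b₁
  have h2 : finrank k V₂ = 2 := by simpa using finrank_eq_card_basis b₂
  rw [LinearMap.injective_iff_surjective_of_finrank_eq_finrank
    (by simp [exteriorPower.finrank_eq, finrank_linearMap, h1, h2, Nat.choose])]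
  rintro ⟨a, c, S⟩
  refine ⟨a • exteriorPower.ιMulti k 2 ![(b₁ 0, 0), (b₁ 1, 0)] +
    c • exteriorPower.ιMulti k 2 ![(0, b₂ 0), (0, b₂ 1)] +
    exteriorPower.ιMulti k 2 ![(b₁ 1, 0), (0, S (b₁ 0))] -
    exteriorPower.ιMulti k 2 ![(b₁ 0, 0), (0, S (b₁ 1))], ?_⟩
  simp only [LinearMap.prod_apply, map_add, map_sub, map_smul]
  refine Prod.ext ?_ (Prod.ext ?_ (b₁.ext fun i => ?_))
  · simp [fstComponent, exteriorPower.alternatingMapLinearEquiv_apply_ιMulti, Basis.det_apply,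
      Matrix.det_fin_two, Basis.toMatrix_apply]
  · simp [sndComponent, exteriorPower.alternatingMapLinearEquiv_apply_ιMulti, Basis.det_apply,
      Matrix.det_fin_two, Basis.toMatrix_apply]
  · fin_cases i <;>
      simp [mixedComponent, exteriorPower.alternatingMapLinearEquiv_apply_ιMulti, mixedForm_apply,
        detPairing]

end ExtSqProd

/-- The determinant character of a representation. -/
noncomputable def detChar {k G V : Type} [Field k] [Group G] [AddCommGroup V] [Module k V]
    (σ : Representation k G V) : G →* kˣ :=
  ((LinearMap.det : (V →ₗ[k] V) →* k).comp σ).toHomUnits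

/-- Schur's lemma: a nonzero intertwining map between irreducible representations is bijective. -/
lemma bijective_of_intertwining {k G V W : Type} [Field k] [Group G]
    [AddCommGroup V] [Module k V] [AddCommGroup W] [Module k W]
    (σ : Representation k G V) (τ : Representation k G W)
    (hσ : ∀ p : Submodule k V, (∀ g : G, ∀ v ∈ p, σ g v ∈ p) → p = ⊥ ∨ p = ⊤)
    (hτ : ∀ p : Submodule k W, (∀ g : G, ∀ v ∈ p, τ g v ∈ p) → p = ⊥ ∨ p = ⊤)
    (χ : G →* kˣ) (T : V →ₗ[k] W) (hT : T ≠ 0)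
    (h : ∀ g v, T ((χ g : k) • σ g v) = τ g (T v)) : Function.Bijective T := by
  constructor
  · rw [← LinearMap.ker_eq_bot]
    refine (hσ _ fun g v hv => ?_).resolve_right fun hk => hT (LinearMap.ker_eq_top.mp hk)
    have := h g v
    rw [LinearMap.mem_ker.mp hv, map_zero, map_smul] at this
    exact (smul_eq_zero.mp this).resolve_left (χ g).ne_zero
  · rw [← LinearMap.range_eq_top]
    refine (hτ _ ?_).resolve_left fun hr => hT (LinearMap.range_eq_bot.mp hr)
    rintro g _ ⟨v, rfl⟩
    exact ⟨_, h g v⟩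

theorem stmt_2 {k G V₁ V₂ : Type} [Field k] [IsAlgClosed k] [CharZero k] [Group G]
    [AddCommGroup V₁] [Module k V₁] [FiniteDimensional k V₁]
    [AddCommGroup V₂] [Module k V₂] [FiniteDimensional k V₂]
    (σ₁ : Representation k G V₁) (σ₂ : Representation k G V₂)
    (h1 : finrank k V₁ = 2) (h2 : finrank k V₂ = 2)
    -- σ₁ and σ₂ are irreducible
    (hirr1 : (⊥ : Submodule k V₁) ≠ ⊤ ∧
      ∀ p : Submodule k V₁, (∀ g : G, ∀ v ∈ p, σ₁ g v ∈ p) → p = ⊥ ∨ p = ⊤)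
    (hirr2 : (⊥ : Submodule k V₂) ≠ ⊤ ∧
      ∀ p : Submodule k V₂, (∀ g : G, ∀ v ∈ p, σ₂ g v ∈ p) → p = ⊥ ∨ p = ⊤)
    (ν : G →* kˣ)
    -- ν occurs in ⋀²r, where r = σ₁ ⊕ σ₂ acts on V₁ × V₂
    (hocc : ∃ L : Submodule k (⋀[k]^2 (V₁ × V₂)), finrank k L = 1 ∧
        ∀ g : G, ∀ x ∈ L,
          extSq (LinearMap.prodMap (σ₁ g) (σ₂ g)) x = (ν g : k) • x)
    -- (det σ₁)·(det σ₂) = ν²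
    (hdet : ∀ g : G, LinearMap.det (σ₁ g) * LinearMap.det (σ₂ g) = ((ν g : k)) ^ 2) :
    ((∀ g : G, LinearMap.det (σ₁ g) = (ν g : k)) ∧
      (∀ g : G, LinearMap.det (σ₂ g) = (ν g : k))) ∨
    (∃ χ : G →* kˣ, ∃ e : V₁ ≃ₗ[k] V₂,
      ∀ (g : G) (v : V₁), e ((χ g : k) • σ₁ g v) = σ₂ g (e v)) := by
  let b₁ := finBasisOfFinrankEq k V₁ h1
  let b₂ := finBasisOfFinrankEq k V₂ h2
  obtain ⟨L, hL, hLν⟩ := hocc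
  have hL0 : L ≠ ⊥ := by
    rintro rfl
    exact zero_ne_one ((finrank_bot k _).symm.trans hL)
  obtain ⟨x, hxL, hx⟩ := L.exists_mem_ne_zero_of_ne_bot hL0
  have hν := fun g => hLν g x hxL
  by_cases hfst : fstComponent V₂ b₁ x = 0
  · by_cases hsnd : sndComponent V₁ b₂ x = 0
    · right
      have hT : mixedComponent V₂ b₁ x ≠ 0 := fun hT => hx <| components_injective b₁ b₂ <| by
        simp [hfst, hsnd, hT]
      have hinter : ∀ g v, mixedComponent V₂ b₁ x (((ν / detChar σ₁) g : k) • σ₁ g v) =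
          σ₂ g (mixedComponent V₂ b₁ x v) := fun g v => by
        have h := mixedComponent_extSq b₁ (σ₁ g) (σ₂ g) x v
        have hd : ((detChar σ₁ g : kˣ) : k) = LinearMap.det (σ₁ g) := rfl
        rw [hν g, map_smul, LinearMap.smul_apply, ← hd] at h
        rw [map_smul, MonoidHom.div_apply, Units.val_div_eq_div_val, div_eq_inv_mul, mul_smul, h,
          inv_smul_smul₀ (Units.ne_zero _)]
      exact ⟨ν / detChar σ₁, LinearEquiv.ofBijective _
        (bijective_of_intertwining σ₁ σ₂ hirr1.2 hirr2.2 _ _ hT hinter), hinter⟩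
    · left
      have hd : ∀ g, LinearMap.det (σ₂ g) = (ν g : k) := fun g => by
        have h := sndComponent_extSq b₂ (σ₁ g) (σ₂ g) x
        rw [hν g, map_smul, smul_eq_mul] at h
        exact (mul_right_cancel₀ hsnd h).symm
      refine ⟨fun g => mul_right_cancel₀ (ν g).ne_zero ?_, hd⟩
      rw [← sq, ← hdet g, hd g]
  · left
    have hd : ∀ g, LinearMap.det (σ₁ g) = (ν g : k) := fun g => by
      have h := fstComponent_extSq b₁ (σ₁ g) (σ₂ g) x
      rw [hν g, map_smul, smul_eq_mul] at h
      exact (mul_right_cancel₀ hfst h).symm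
    refine ⟨hd, fun g => mul_left_cancel₀ (ν g).ne_zero ?_⟩
    rw [← sq, ← hdet g, hd g]
end
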